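/- arXiv:1205.6565 — 2 statements merged into one kernel-verified Lean document; each statement's English description precedes it below -/
import Mathlib

section
/- Let E : P_{μ₀}(ℝ^d) → ℝ ∪ {∞} be proper, coercive, lower semicontinuous, and λ-convex along generalized geodesics with λ > 0, and let τ > 0 satisfy τλ ≤ 1. Then for all μ, ν in the W₂-closure of D(E), with μ_τ, ν_τ the proximal points: (1+τλ) Λ_τ(μ_τ,ν_τ) ≤ (1−τλ) Λ_τ(μ,ν) + 3λτ Λ_τ(μ,ν)^{1/2} [ W₂(μ,μ_τ) + W₂(ν,ν_τ) ]. -/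
/-!
Write `k = τλ`, `a = W₂(μ,μ_τ)`, `b = W₂(ν,ν_τ)`.

Comparing `μ_τ` with points of the generalized geodesic based at `μ` and going from `μ_τ` to `ρ`
gives the discrete variational inequality (`discrete_variational`)
`(1+k) W₂²(μ_τ,ρ) ≤ W₂²(μ,ρ) - a² + 2τ (E(ρ) - E(μ_τ))`.
Take it with `ρ = ν_τ` and with `ρ = ν`, take the inequality for `ν_τ` with `ρ = μ_τ` and with
`ρ = μ`, and average: the energies of the proximal points combine to
`(1+k) W₂²(μ_τ,ν_τ) + (k/2) (W₂²(μ,ν_τ) + W₂²(ν,μ_τ))`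
`≤ W₂²(μ,ν) - a² - b² + τ (E(μ) - E(μ_τ)) + τ (E(ν) - E(ν_τ))`.

Convexity bounds the energy drops, `E(μ) - E(μ_τ) ≤ |∇E|(μ) a - (λ/2) a²` (`energy_drop_le`), and
minimality bounds the slopes at the proximal points, `τ |∇E|(μ_τ) ≤ a` (`slopeW_prox_le`).
Young's inequality on the fraction `1 - k` of each term `τ |∇E|(μ) a - a²/2`, the bound
`τ |∇E|(μ) ≤ 2 Λ^{1/2}` on the remaining fraction `k`, and the triangle inequality
`W₂²(μ,ν_τ) ≥ W₂²(μ,ν) - 2 W₂(μ,ν) b` then give the claim (`real_contraction`).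

If `Λ_τ(μ,ν)` is infinite, one of the slopes is, so `(μ,ν) ≠ (μ_τ,ν_τ)` because proximal points
have finite slope; hence `a + b > 0` and the right-hand side is infinite. In particular
this covers `E(μ) = ∞`, where the slope is infinite since `μ` is a limit of `D(E)`
(`slopeW_eq_top`).

The triangle inequality for `W₂` is proved by gluing plans through disintegration (`exists_glue`);
optimal plans themselves are supplied by the generalized convexity hypothesis.
-/

open MeasureTheory Filter ENNReal

noncomputable section

/-- Euclidean space `ℝ^d`. -/
abbrev Euc (d : ℕ) := EuclideanSpace ℝ (Fin d)

/-- The squared 2-Wasserstein distance, as an extended nonnegative real: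
the infimum over couplings `γ` (Borel probability measures on `ℝ^d × ℝ^d`
with first marginal `μ` and second marginal `ν`) of `∫ |x-y|² dγ`. -/
noncomputable def W2sq {d : ℕ} (μ ν : Measure (Euc d)) : ℝ≥0∞ :=
  ⨅ (γ : Measure (Euc d × Euc d)) (_ : γ.map Prod.fst = μ ∧ γ.map Prod.snd = ν),
    ∫⁻ q, ENNReal.ofReal (‖q.1 - q.2‖ ^ 2) ∂γ

/-- The 2-Wasserstein distance (a real number; degenerate when `W2sq = ∞`). -/
noncomputable def W2 {d : ℕ} (μ ν : Measure (Euc d)) : ℝ :=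
  Real.sqrt (W2sq μ ν).toReal

/-- `γ` is an optimal transport plan from `μ` to `ν`. -/
def IsOptimalPlan {d : ℕ} (μ ν : Measure (Euc d)) (γ : Measure (Euc d × Euc d)) : Prop :=
  γ.map Prod.fst = μ ∧ γ.map Prod.snd = ν ∧
    ∫⁻ q, ENNReal.ofReal (‖q.1 - q.2‖ ^ 2) ∂γ = W2sq μ ν

/-- `P_{μ₀}(ℝ^d)`: Borel probability measures at finite `W₂`-distance from `μ₀`. -/
def Pfin {d : ℕ} (μ₀ : Measure (Euc d)) : Set (Measure (Euc d)) :=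
  {μ | IsProbabilityMeasure μ ∧ W2sq μ₀ μ ≠ ⊤}

/-- `E` is proper: its domain inside `P_{μ₀}` is nonempty (and `E` never takes the value `-∞`,
i.e. it maps into `ℝ ∪ {∞}`). -/
def ProperFn {d : ℕ} (μ₀ : Measure (Euc d)) (F : Measure (Euc d) → EReal) : Prop :=
  (∀ ρ, F ρ ≠ ⊥) ∧ ∃ ρ ∈ Pfin μ₀, F ρ ≠ ⊤

/-- The domain `D(E)` of `E`. -/
def Dom {d : ℕ} (μ₀ : Measure (Euc d)) (F : Measure (Euc d) → EReal) : Set (Measure (Euc d)) :=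
  {μ ∈ Pfin μ₀ | F μ ≠ ⊤}

/-- `E` is coercive: for some `τ₀ > 0`,
`inf_ν { W₂²(μ₀,ν)/(2τ₀) + E(ν) } > -∞`. -/
def CoerciveFn {d : ℕ} (μ₀ : Measure (Euc d)) (F : Measure (Euc d) → EReal) : Prop :=
  ∃ τ₀ : ℝ, 0 < τ₀ ∧
    ⊥ < ⨅ ν ∈ Pfin μ₀, (((W2 μ₀ ν) ^ 2 / (2 * τ₀) : ℝ) : EReal) + F ν

/-- `E` is sequentially lower semicontinuous with respect to `W₂`-convergence. -/
def W2LSC {d : ℕ} (μ₀ : Measure (Euc d)) (F : Measure (Euc d) → EReal) : Prop :=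
  ∀ (s : ℕ → Measure (Euc d)) (μ : Measure (Euc d)),
    (∀ n, s n ∈ Pfin μ₀) → μ ∈ Pfin μ₀ →
    Tendsto (fun n => W2 (s n) μ) atTop (nhds 0) →
    F μ ≤ liminf (fun n => F (s n)) atTop

/-- `E` is `λ`-convex along generalized geodesics: for all `μ₁, μ₂, μ₃ ∈ P_{μ₀}` there
is a 3-plan whose (1,2)- and (1,3)-marginals are optimal, along whose induced interpolating
curve the `λ`-convexity inequality (with the full transport cost `∫|x₂-x₃|² d𝛍`) holds. -/
def GenGeoConvex {d : ℕ} (μ₀ : Measure (Euc d)) (lam : ℝ)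
    (F : Measure (Euc d) → EReal) : Prop :=
  ∀ μ₁ ∈ Pfin μ₀, ∀ μ₂ ∈ Pfin μ₀, ∀ μ₃ ∈ Pfin μ₀,
    ∃ pl : Measure (Euc d × Euc d × Euc d),
      IsOptimalPlan μ₁ μ₂ (pl.map (fun q => (q.1, q.2.1))) ∧
      IsOptimalPlan μ₁ μ₃ (pl.map (fun q => (q.1, q.2.2))) ∧
      ∀ α ∈ Set.Icc (0:ℝ) 1,
        F (pl.map (fun q => (1 - α) • q.2.1 + α • q.2.2)) ≤
          ((1 - α : ℝ) : EReal) * F μ₂ + (α : EReal) * F μ₃ -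
            ((α * (1 - α) * (lam / 2) *
              (∫⁻ q, ENNReal.ofReal (‖q.2.1 - q.2.2‖ ^ 2) ∂pl).toReal : ℝ) : EReal)

/-- The `W₂`-closure (within `P_{μ₀}`) of a set of measures. -/
def W2Closure {d : ℕ} (μ₀ : Measure (Euc d)) (S : Set (Measure (Euc d))) :
    Set (Measure (Euc d)) :=
  {μ ∈ Pfin μ₀ | ∃ s : ℕ → Measure (Euc d), (∀ n, s n ∈ S) ∧
    Tendsto (fun n => W2 (s n) μ) atTop (nhds 0)}

/-- The Moreau–Yosida regularization `E_τ`. -/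
noncomputable def MY {d : ℕ} (μ₀ : Measure (Euc d)) (F : Measure (Euc d) → EReal)
    (τ : ℝ) (μ : Measure (Euc d)) : EReal :=
  ⨅ ν ∈ Pfin μ₀, (((W2 μ ν) ^ 2 / (2 * τ) : ℝ) : EReal) + F ν

/-- `ν` is a proximal point of `μ` for `E` with step `τ`: it minimizes
`ρ ↦ W₂²(μ,ρ)/(2τ) + E(ρ)` over `P_{μ₀}`. -/
def IsProximal {d : ℕ} (μ₀ : Measure (Euc d)) (F : Measure (Euc d) → EReal)
    (τ : ℝ) (μ ν : Measure (Euc d)) : Prop :=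
  ν ∈ Pfin μ₀ ∧ ∀ ρ ∈ Pfin μ₀,
    (((W2 μ ν) ^ 2 / (2 * τ) : ℝ) : EReal) + F ν ≤
      (((W2 μ ρ) ^ 2 / (2 * τ) : ℝ) : EReal) + F ρ

/-- The positive part of an extended real, as an element of `[0,∞]`. -/
noncomputable def ERealPos (x : EReal) : ℝ≥0∞ :=
  if x = ⊤ then ⊤ else ENNReal.ofReal x.toReal

/-- The filter of `W₂`-punctured neighborhoods of `μ` within `P_{μ₀}`. -/
def W2nhdsWithin {d : ℕ} (μ₀ μ : Measure (Euc d)) : Filter (Measure (Euc d)) :=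
  ⨅ ε ∈ Set.Ioi (0:ℝ), Filter.principal {ν | ν ∈ Pfin μ₀ ∧ ν ≠ μ ∧ W2 μ ν < ε}

/-- The metric slope `|∇_W F|(μ) = limsup_{ν → μ} (F(μ)-F(ν))⁺ / W₂(μ,ν)`,
valued in `[0,∞]`. -/
noncomputable def slopeW {d : ℕ} (μ₀ : Measure (Euc d)) (F : Measure (Euc d) → EReal)
    (μ : Measure (Euc d)) : ℝ≥0∞ :=
  Filter.limsup (fun ν => ERealPos (F μ - F ν) / ENNReal.ofReal (W2 μ ν))
    (W2nhdsWithin μ₀ μ)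

/-- `Λ_τ(μ,ν) = W₂²(μ,ν) + (τ²/2)|∇_W E|(μ)² + (τ²/2)|∇_W E|(ν)²`, valued in `[0,∞]`. -/
noncomputable def LamT {d : ℕ} (μ₀ : Measure (Euc d)) (F : Measure (Euc d) → EReal)
    (τ : ℝ) (μ ν : Measure (Euc d)) : ℝ≥0∞ :=
  W2sq μ ν + ENNReal.ofReal (τ ^ 2 / 2) * (slopeW μ₀ F μ) ^ 2
    + ENNReal.ofReal (τ ^ 2 / 2) * (slopeW μ₀ F ν) ^ 2

/-! ### The Wasserstein pseudometric -/

theorem lintegral_sq_eq {α : Type*} [MeasurableSpace α] {d : ℕ} (f : α → Euc d)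
    (γ : Measure α) :
    ∫⁻ q, ENNReal.ofReal (‖f q‖ ^ 2) ∂γ = eLpNorm f 2 γ ^ 2 := by
  have h := eLpNorm_nnreal_pow_eq_lintegral (f := f) (μ := γ) (p := 2) (by norm_num)
  simp only [NNReal.coe_ofNat, ENNReal.rpow_ofNat, ENNReal.coe_ofNat] at h
  rw [h]
  refine lintegral_congr fun q => ?_
  rw [ENNReal.ofReal_pow (norm_nonneg _), ofReal_norm]

/-- Any two maps out of the same measure space provide a coupling of their laws. -/
theorem W2sq_le {d : ℕ} {α : Type*} [MeasurableSpace α] (γ : Measure α) (f g : α → Euc d)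
    (hf : Measurable f) (hg : Measurable g) :
    W2sq (γ.map f) (γ.map g) ≤ ∫⁻ q, ENNReal.ofReal (‖f q - g q‖ ^ 2) ∂γ := by
  refine (iInf₂_le (γ.map fun q => (f q, g q)) ⟨?_, ?_⟩).trans (le_of_eq ?_)
  rotate_left
  · rw [Measure.map_map measurable_fst (hf.prodMk hg)]; rfl
  · rw [Measure.map_map measurable_snd (hf.prodMk hg)]; rfl
  · rw [lintegral_map (by fun_prop) (hf.prodMk hg)]

theorem W2sq_comm {d : ℕ} (μ ν : Measure (Euc d)) : W2sq μ ν = W2sq ν μ := by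
  have key : ∀ μ ν : Measure (Euc d), W2sq μ ν ≤ W2sq ν μ := by
    intro μ ν
    refine le_iInf₂ ?_
    rintro γ ⟨rfl, rfl⟩
    refine (W2sq_le γ _ _ measurable_snd measurable_fst).trans (le_of_eq ?_)
    refine lintegral_congr fun q => ?_
    rw [norm_sub_rev]
  exact le_antisymm (key _ _) (key _ _)

theorem W2_comm {d : ℕ} (μ ν : Measure (Euc d)) : W2 μ ν = W2 ν μ := by
  unfold W2; rw [W2sq_comm]

theorem W2_nonneg {d : ℕ} (μ ν : Measure (Euc d)) : 0 ≤ W2 μ ν := Real.sqrt_nonneg _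

theorem W2_sq {d : ℕ} (μ ν : Measure (Euc d)) : W2 μ ν ^ 2 = (W2sq μ ν).toReal :=
  Real.sq_sqrt ENNReal.toReal_nonneg

/-- Gluing: two plans sharing the middle marginal come from one plan on the triple product. -/
theorem exists_glue {d : ℕ} (γ₁ γ₂ : Measure (Euc d × Euc d)) [IsProbabilityMeasure γ₁]
    [IsProbabilityMeasure γ₂] (h : γ₁.map Prod.snd = γ₂.map Prod.fst) :
    ∃ σ : Measure ((Euc d × Euc d) × Euc d), σ.map Prod.fst = γ₁ ∧
      σ.map (fun q => (q.1.2, q.2)) = γ₂ := by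
  refine ⟨γ₁.compProd (γ₂.condKernel.comap Prod.snd measurable_snd), ?_, ?_⟩
  · exact Measure.fst_compProd _ _
  · ext S hS
    have hm : Measurable fun q : (Euc d × Euc d) × Euc d => (q.1.2, q.2) := by fun_prop
    conv_rhs => rw [← γ₂.disintegrate γ₂.condKernel]
    rw [Measure.map_apply hm hS, Measure.compProd_apply (hm hS), Measure.compProd_apply hS,
      Measure.fst, ← h, lintegral_map (ProbabilityTheory.Kernel.measurable_kernel_prodMk_left hS)
        measurable_snd]
    rfl

theorem isProb_of_map {α β : Type*} [MeasurableSpace α] [MeasurableSpace β] {γ : Measure α}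
    {f : α → β} (hf : Measurable f) (h : IsProbabilityMeasure (γ.map f)) :
    IsProbabilityMeasure γ := by
  refine ⟨?_⟩
  have := h.measure_univ
  rwa [Measure.map_apply hf MeasurableSet.univ, Set.preimage_univ] at this

/-- Triangle inequality through arbitrary (not necessarily optimal) plans. -/
theorem glue_le {d : ℕ} {γ₁ γ₂ : Measure (Euc d × Euc d)}
    (hp : IsProbabilityMeasure γ₁) (h : γ₁.map Prod.snd = γ₂.map Prod.fst) :
    W2sq (γ₁.map Prod.fst) (γ₂.map Prod.snd) ≤
      (eLpNorm (fun q => q.1 - q.2) 2 γ₁ + eLpNorm (fun q => q.1 - q.2) 2 γ₂) ^ 2 := by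
  have hp2 : IsProbabilityMeasure γ₂ := by
    refine isProb_of_map measurable_fst ?_
    rw [← h]; exact Measure.isProbabilityMeasure_map measurable_snd.aemeasurable
  obtain ⟨σ, h1, h2⟩ := exists_glue γ₁ γ₂ h
  have hm : Measurable fun q : (Euc d × Euc d) × Euc d => (q.1.2, q.2) := by fun_prop
  have hms : Measurable fun q : Euc d × Euc d => q.1 - q.2 := by fun_prop
  have e1 : γ₁.map Prod.fst = σ.map (fun q => q.1.1) := by
    rw [← h1, Measure.map_map measurable_fst measurable_fst]; rfl
  have e2 : γ₂.map Prod.snd = σ.map (fun q => q.2) := by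
    rw [← h2, Measure.map_map measurable_snd hm]; rfl
  rw [e1, e2]
  refine (W2sq_le σ _ _ (by fun_prop) (by fun_prop)).trans ?_
  rw [lintegral_sq_eq]
  gcongr
  nth_rewrite 1 [← h1]
  nth_rewrite 1 [← h2]
  rw [eLpNorm_map_measure hms.aestronglyMeasurable measurable_fst.aemeasurable,
    eLpNorm_map_measure hms.aestronglyMeasurable hm.aemeasurable]
  refine le_trans (le_of_eq ?_) (eLpNorm_add_le (hms.comp measurable_fst).aestronglyMeasurable
    (hms.comp hm).aestronglyMeasurable (by norm_num))
  congr 1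
  ext1 q
  simp

theorem W2sq_self {d : ℕ} (μ : Measure (Euc d)) : W2sq μ μ = 0 := by
  have := W2sq_le μ id id measurable_id measurable_id
  simpa using this

/-- Existence of optimal plans is part of the generalized convexity hypothesis. -/
theorem exists_optimal {d : ℕ} {μ₀ : Measure (Euc d)} {F : Measure (Euc d) → EReal} {lam : ℝ}
    (hconv : GenGeoConvex μ₀ lam F) {μ ν : Measure (Euc d)} (hμ : μ ∈ Pfin μ₀)
    (hν : ν ∈ Pfin μ₀) : ∃ γ, IsOptimalPlan μ ν γ := by
  obtain ⟨pl, h, -⟩ := hconv μ hμ ν hν ν hν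
  exact ⟨_, h⟩

/-- Stated for a measure `ν` not yet known to lie in `P_{μ₀}`, so that no optimal plan to `ν` is
available and arbitrary finite-cost plans are glued instead. -/
theorem mem_Pfin_of_W2sq {d : ℕ} {μ₀ μ ν : Measure (Euc d)} (hμ : μ ∈ Pfin μ₀)
    (hμ₀ : IsProbabilityMeasure μ₀) (hν : IsProbabilityMeasure ν) (h : W2sq μ ν ≠ ⊤) :
    ν ∈ Pfin μ₀ := by
  refine ⟨hν, ?_⟩
  have h1 := hμ.2.lt_top
  have h2 := h.lt_top
  simp only [W2sq, iInf_lt_iff] at h1 h2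
  obtain ⟨γ₁, ⟨a1, b1⟩, c1⟩ := h1
  obtain ⟨γ₂, ⟨a2, b2⟩, c2⟩ := h2
  have := glue_le (γ₁ := γ₁) (γ₂ := γ₂) (isProb_of_map measurable_fst (a1 ▸ hμ₀)) (b1.trans a2.symm)
  rw [a1, b2] at this
  rw [lintegral_sq_eq] at c1 c2
  refine ne_top_of_le_ne_top (ENNReal.pow_ne_top (ENNReal.add_ne_top.2 ⟨?_, ?_⟩)) this
  · intro hh; rw [hh] at c1; simp at c1
  · intro hh; rw [hh] at c2; simp at c2

theorem W2sq_ne_top {d : ℕ} {μ₀ μ ν : Measure (Euc d)} (hμ : μ ∈ Pfin μ₀) (hν : ν ∈ Pfin μ₀) :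
    W2sq μ ν ≠ ⊤ :=
  -- the triangle inequality through `μ₀`, read with `μ` as the base point
  (mem_Pfin_of_W2sq (μ₀ := μ) (μ := μ₀) ⟨by
    have h := hμ.2.lt_top
    simp only [W2sq, iInf_lt_iff] at h
    obtain ⟨γ, ⟨a, b⟩, -⟩ := h
    have := isProb_of_map (γ := γ) measurable_snd (b ▸ hμ.1)
    rw [← a]; exact Measure.isProbabilityMeasure_map measurable_fst.aemeasurable,
    by rw [W2sq_comm]; exact hμ.2⟩ hμ.1 hν.1 hν.2).2

theorem optimal_eLpNorm {d : ℕ} {μ ν : Measure (Euc d)} {γ : Measure (Euc d × Euc d)}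
    (h : IsOptimalPlan μ ν γ) : (eLpNorm (fun q => q.1 - q.2) 2 γ).toReal = W2 μ ν := by
  rw [W2, ← h.2.2, lintegral_sq_eq, ENNReal.toReal_pow, Real.sqrt_sq ENNReal.toReal_nonneg]

theorem W2_triangle {d : ℕ} {μ₀ : Measure (Euc d)} {F : Measure (Euc d) → EReal} {lam : ℝ}
    (hconv : GenGeoConvex μ₀ lam F) {μ ν ρ : Measure (Euc d)} (hμ : μ ∈ Pfin μ₀)
    (hν : ν ∈ Pfin μ₀) (hρ : ρ ∈ Pfin μ₀) : W2 μ ρ ≤ W2 μ ν + W2 ν ρ := by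
  obtain ⟨γ₁, h1⟩ := exists_optimal hconv hμ hν
  obtain ⟨γ₂, h2⟩ := exists_optimal hconv hν hρ
  have h := glue_le (γ₁ := γ₁) (γ₂ := γ₂) (isProb_of_map measurable_fst (h1.1 ▸ hμ.1))
    (h1.2.1.trans h2.1.symm)
  rw [h1.1, h2.2.1] at h
  have f1 : eLpNorm (fun q => q.1 - q.2) 2 γ₁ ≠ ⊤ := by
    intro hh
    have := h1.2.2
    rw [lintegral_sq_eq, hh] at this
    exact W2sq_ne_top hμ hν (by simpa using this.symm)
  have f2 : eLpNorm (fun q => q.1 - q.2) 2 γ₂ ≠ ⊤ := by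
    intro hh
    have := h2.2.2
    rw [lintegral_sq_eq, hh] at this
    exact W2sq_ne_top hν hρ (by simpa using this.symm)
  have h' := ENNReal.toReal_mono (ENNReal.pow_ne_top (ENNReal.add_ne_top.2 ⟨f1, f2⟩)) h
  rw [ENNReal.toReal_pow, ENNReal.toReal_add f1 f2, optimal_eLpNorm h1, optimal_eLpNorm h2] at h'
  exact Real.sqrt_le_iff.2 ⟨add_nonneg (W2_nonneg _ _) (W2_nonneg _ _), h'⟩

theorem eq_of_W2_eq_zero {d : ℕ} {μ₀ : Measure (Euc d)} {F : Measure (Euc d) → EReal} {lam : ℝ}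
    (hconv : GenGeoConvex μ₀ lam F) {μ ν : Measure (Euc d)} (hμ : μ ∈ Pfin μ₀)
    (hν : ν ∈ Pfin μ₀) (h : W2 μ ν = 0) : μ = ν := by
  obtain ⟨γ, a, b, c⟩ := exists_optimal hconv hμ hν
  have h0 : W2sq μ ν = 0 := by
    have := W2_sq μ ν
    rw [h] at this
    have := (ENNReal.toReal_eq_zero_iff _).1 (this.symm.trans (by norm_num))
    exact this.resolve_right (W2sq_ne_top hμ hν)
  rw [h0, lintegral_eq_zero_iff (by fun_prop)] at c
  rw [← a, ← b]
  refine Measure.map_congr ?_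
  filter_upwards [c] with q hq
  have h2 : ‖q.1 - q.2‖ ^ 2 ≤ 0 := ENNReal.ofReal_eq_zero.1 hq
  have h3 : ‖q.1 - q.2‖ = 0 := by
    have := norm_nonneg (q.1 - q.2)
    nlinarith
  exact sub_eq_zero.1 (norm_eq_zero.1 h3)

/-! ### Generalized geodesics and the discrete variational inequality -/

theorem norm_sub_interp_sq {d : ℕ} (x y z : Euc d) (α : ℝ) :
    ‖x - ((1 - α) • y + α • z)‖ ^ 2 + α * (1 - α) * ‖y - z‖ ^ 2 =
      (1 - α) * ‖x - y‖ ^ 2 + α * ‖x - z‖ ^ 2 := by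
  have h1 : x - ((1 - α) • y + α • z) = (1 - α) • (x - y) + α • (x - z) := by module
  have h2 : y - z = (x - z) - (x - y) := by abel
  rw [h1, h2, norm_add_sq_real, norm_sub_sq_real (x - z), norm_smul, norm_smul, mul_pow, mul_pow,
    inner_smul_left, inner_smul_right, Real.norm_eq_abs, Real.norm_eq_abs, sq_abs, sq_abs,
    real_inner_comm (x - y)]
  simp only [conj_trivial]
  ring

theorem lintegral_interp {d : ℕ} (pl : Measure (Euc d × Euc d × Euc d)) {α : ℝ}
    (h0 : 0 ≤ α) (h1 : α ≤ 1) :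
    ∫⁻ q, ENNReal.ofReal (‖q.1 - ((1 - α) • q.2.1 + α • q.2.2)‖ ^ 2) ∂pl
      + ENNReal.ofReal (α * (1 - α)) * ∫⁻ q, ENNReal.ofReal (‖q.2.1 - q.2.2‖ ^ 2) ∂pl
    = ENNReal.ofReal (1 - α) * ∫⁻ q, ENNReal.ofReal (‖q.1 - q.2.1‖ ^ 2) ∂pl
      + ENNReal.ofReal α * ∫⁻ q, ENNReal.ofReal (‖q.1 - q.2.2‖ ^ 2) ∂pl := by
  have h1' : 0 ≤ 1 - α := by linarith
  rw [← lintegral_const_mul _ (by fun_prop), ← lintegral_const_mul _ (by fun_prop),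
    ← lintegral_const_mul _ (by fun_prop), ← lintegral_add_left (by fun_prop),
    ← lintegral_add_left (by fun_prop)]
  refine lintegral_congr fun q => ?_
  rw [← ENNReal.ofReal_mul (by positivity), ← ENNReal.ofReal_mul (by positivity),
    ← ENNReal.ofReal_mul (by positivity), ← ENNReal.ofReal_add (by positivity) (by positivity),
    ← ENNReal.ofReal_add (by positivity) (by positivity), norm_sub_interp_sq]

/-- The generalized geodesic from `μ₂` to `μ₃` with base `μ₁`, in real-number form: along it the
energy is `λ`-convex and the squared distance to the base is `2`-convex, with the same transport
cost `C ≥ W₂²(μ₂,μ₃)` as modulus. -/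
theorem exists_genGeodesic {d : ℕ} {μ₀ : Measure (Euc d)} (hμ₀ : IsProbabilityMeasure μ₀)
    {F : Measure (Euc d) → EReal} {lam : ℝ}
    (hbot : ∀ ρ, F ρ ≠ ⊥) (hconv : GenGeoConvex μ₀ lam F) {μ₁ μ₂ μ₃ : Measure (Euc d)}
    (m1 : μ₁ ∈ Pfin μ₀) (m2 : μ₂ ∈ Pfin μ₀) (m3 : μ₃ ∈ Pfin μ₀) {f g : ℝ}
    (hf : F μ₂ = f) (hg : F μ₃ = g) :
    ∃ (C : ℝ) (ρ : ℝ → Measure (Euc d)), W2 μ₂ μ₃ ^ 2 ≤ C ∧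
      ∀ α, 0 ≤ α → α ≤ 1 → ρ α ∈ Pfin μ₀ ∧
        W2 μ₁ (ρ α) ^ 2 ≤ (1 - α) * W2 μ₁ μ₂ ^ 2 + α * W2 μ₁ μ₃ ^ 2 - α * (1 - α) * C ∧
        ∃ r : ℝ, F (ρ α) = r ∧ r ≤ (1 - α) * f + α * g - α * (1 - α) * (lam / 2) * C := by
  obtain ⟨pl, ⟨a1, a2, a3⟩, ⟨b1, b2, b3⟩, hc⟩ := hconv μ₁ m1 μ₂ m2 μ₃ m3
  have ma : Measurable fun q : Euc d × Euc d × Euc d => (q.1, q.2.1) := by fun_prop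
  have mb : Measurable fun q : Euc d × Euc d × Euc d => (q.1, q.2.2) := by fun_prop
  rw [Measure.map_map measurable_fst ma] at a1
  rw [Measure.map_map measurable_snd ma] at a2
  rw [Measure.map_map measurable_snd mb] at b2
  rw [lintegral_map (by fun_prop) ma] at a3
  rw [lintegral_map (by fun_prop) mb] at b3
  change pl.map (fun q => q.1) = μ₁ at a1
  change pl.map (fun q => q.2.1) = μ₂ at a2
  change pl.map (fun q => q.2.2) = μ₃ at b2
  simp only at a3 b3
  have hpl : IsProbabilityMeasure pl := isProb_of_map (f := fun q => q.1) (by fun_prop) (a1 ▸ m1.1)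
  have fa := W2sq_ne_top m1 m2
  have fb := W2sq_ne_top m1 m3
  have id := fun α h0 h1 => lintegral_interp pl (α := α) h0 h1
  simp only [a3, b3] at id
  have hsum : ∀ α : ℝ, ENNReal.ofReal (1 - α) * W2sq μ₁ μ₂ + ENNReal.ofReal α * W2sq μ₁ μ₃ ≠ ⊤ :=
    fun α => ENNReal.add_ne_top.2 ⟨ENNReal.mul_ne_top ENNReal.ofReal_ne_top fa,
      ENNReal.mul_ne_top ENNReal.ofReal_ne_top fb⟩
  have fC : ∫⁻ q, ENNReal.ofReal (‖q.2.1 - q.2.2‖ ^ 2) ∂pl ≠ ⊤ := by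
    -- the interpolation identity at the midpoint bounds the cost of the (2,3)-coupling
    intro hh
    have h := id (1 / 2) (by norm_num) (by norm_num)
    rw [hh, ENNReal.mul_top (by norm_num), add_top] at h
    exact hsum _ h.symm
  refine ⟨(∫⁻ q, ENNReal.ofReal (‖q.2.1 - q.2.2‖ ^ 2) ∂pl).toReal,
    fun α => pl.map (fun q => (1 - α) • q.2.1 + α • q.2.2), ?_, ?_⟩
  · rw [W2_sq]
    refine ENNReal.toReal_mono fC ?_
    conv_lhs => rw [← a2, ← b2]
    exact W2sq_le pl _ _ (by fun_prop) (by fun_prop)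
  intro α h0 h1
  have hm : Measurable fun q : Euc d × Euc d × Euc d => (1 - α) • q.2.1 + α • q.2.2 := by fun_prop
  have hle : W2sq μ₁ (pl.map (fun q => (1 - α) • q.2.1 + α • q.2.2)) ≤
      ∫⁻ q, ENNReal.ofReal (‖q.1 - ((1 - α) • q.2.1 + α • q.2.2)‖ ^ 2) ∂pl := by
    conv_lhs => rw [← a1]
    exact W2sq_le pl _ _ (by fun_prop) hm
  have e := id α h0 h1
  have hfin : ∫⁻ q, ENNReal.ofReal (‖q.1 - ((1 - α) • q.2.1 + α • q.2.2)‖ ^ 2) ∂pl ≠ ⊤ := by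
    intro hh
    rw [hh, top_add] at e
    exact hsum _ e.symm
  refine ⟨mem_Pfin_of_W2sq m1 hμ₀ (Measure.isProbabilityMeasure_map hm.aemeasurable)
    (ne_top_of_le_ne_top hfin hle), ?_, ?_⟩
  · have e' := congrArg ENNReal.toReal e
    rw [ENNReal.toReal_add hfin (ENNReal.mul_ne_top ENNReal.ofReal_ne_top fC),
      ENNReal.toReal_add (ENNReal.mul_ne_top ENNReal.ofReal_ne_top fa)
        (ENNReal.mul_ne_top ENNReal.ofReal_ne_top fb), ENNReal.toReal_mul, ENNReal.toReal_mul,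
      ENNReal.toReal_mul, ENNReal.toReal_ofReal (mul_nonneg h0 (by linarith)),
      ENNReal.toReal_ofReal h0, ENNReal.toReal_ofReal (by linarith)] at e'
    have := ENNReal.toReal_mono hfin hle
    rw [W2_sq, W2_sq, W2_sq]
    linarith
  · have h := hc α ⟨h0, h1⟩
    rw [hf, hg, ← EReal.coe_mul, ← EReal.coe_mul, ← EReal.coe_add, ← EReal.coe_sub] at h
    have ht : F (pl.map (fun q => (1 - α) • q.2.1 + α • q.2.2)) ≠ ⊤ :=
      ne_top_of_le_ne_top (EReal.coe_ne_top _) h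
    refine ⟨_, (EReal.coe_toReal ht (hbot _)).symm, ?_⟩
    rw [← EReal.coe_toReal ht (hbot _)] at h
    exact EReal.coe_le_coe_iff.1 h

theorem le_of_forall_small {x y z : ℝ}
    (h : ∀ α : ℝ, 0 < α → α < 1 → z - α * y ≤ x) : z ≤ x := by
  have ht : Tendsto (fun α : ℝ => z - α * y) (nhdsWithin 0 (Set.Ioi 0)) (nhds (z - 0 * y)) :=
    ((continuous_const.sub (continuous_id.mul continuous_const)).tendsto 0).mono_left
      nhdsWithin_le_nhds
  rw [zero_mul, sub_zero] at ht
  refine le_of_tendsto ht ?_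
  filter_upwards [Ioo_mem_nhdsGT (zero_lt_one (α := ℝ))] with α hα
  exact h α hα.1 hα.2

theorem prox_ne_top {d : ℕ} {μ₀ : Measure (Euc d)} {F : Measure (Euc d) → EReal}
    (hproper : ProperFn μ₀ F) {τ : ℝ} {μ μτ : Measure (Euc d)} (h : IsProximal μ₀ F τ μ μτ) :
    F μτ ≠ ⊤ := by
  obtain ⟨hbot, ρ, hρ, hρt⟩ := hproper
  intro hh
  have := h.2 ρ hρ
  rw [hh, EReal.coe_add_top, top_le_iff, ← EReal.coe_toReal hρt (hbot ρ), ← EReal.coe_add] at this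
  exact EReal.coe_ne_top _ this

/-- The discrete variational inequality satisfied by a proximal point: it comes from comparing
`μ_τ` with nearby points of the generalized geodesic towards `ρ` based at `μ`. -/
theorem discrete_variational {d : ℕ} {μ₀ : Measure (Euc d)} (hμ₀ : IsProbabilityMeasure μ₀)
    {F : Measure (Euc d) → EReal} {lam : ℝ} (hlam : 0 < lam)
    (hbot : ∀ ρ, F ρ ≠ ⊥) (hconv : GenGeoConvex μ₀ lam F) {τ : ℝ} (hτ : 0 < τ)
    {μ μτ ρ : Measure (Euc d)} (hμ : μ ∈ Pfin μ₀) (h : IsProximal μ₀ F τ μ μτ)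
    (hρ : ρ ∈ Pfin μ₀) {f g : ℝ} (hf : F μτ = f) (hg : F ρ = g) :
    (1 + τ * lam) * W2 μτ ρ ^ 2 ≤ W2 μ ρ ^ 2 - W2 μ μτ ^ 2 + 2 * τ * (g - f) := by
  obtain ⟨C, γ, hC, hγ⟩ := exists_genGeodesic hμ₀ hbot hconv hμ h.1 hρ hf hg
  have hk : 0 < 1 + τ * lam := by positivity
  refine (mul_le_mul_of_nonneg_left hC hk.le).trans ?_
  refine le_of_forall_small (y := (1 + τ * lam) * C) fun α h0 h1 => ?_
  obtain ⟨hm, hw, r, hr, hrle⟩ := hγ α h0.le h1.le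
  have hmin := h.2 _ hm
  rw [hf, hr, ← EReal.coe_add, ← EReal.coe_add, EReal.coe_le_coe_iff] at hmin
  have hmin' : W2 μ μτ ^ 2 + 2 * τ * f ≤ W2 μ (γ α) ^ 2 + 2 * τ * r := by
    have := mul_le_mul_of_nonneg_left hmin (by positivity : 0 ≤ 2 * τ)
    field_simp at this
    linarith
  have hr' := mul_le_mul_of_nonneg_left hrle (by positivity : 0 ≤ 2 * τ)
  refine le_of_mul_le_mul_left ?_ h0
  linarith

/-! ### Slope estimates -/

theorem tendsto_W2nhdsWithin {ι : Type*} {l : Filter ι} {d : ℕ} {μ₀ μ : Measure (Euc d)}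
    {s : ι → Measure (Euc d)} (h : ∀ᶠ i in l, s i ∈ Pfin μ₀ ∧ s i ≠ μ)
    (ht : Tendsto (fun i => W2 μ (s i)) l (nhds 0)) : Tendsto s l (W2nhdsWithin μ₀ μ) := by
  refine tendsto_iInf.2 fun ε => tendsto_iInf.2 fun hε => tendsto_principal.2 ?_
  filter_upwards [h, ht.eventually (gt_mem_nhds hε)] with i hi hi'
  exact ⟨hi.1, hi.2, hi'⟩

/-- Along a `λ`-convex functional, the slope controls the energy drop globally: the geodesic from
`μ` to `ρ` realises a difference quotient at least `(f - g + (λ/2) W₂²)/W₂` in the limit. -/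
theorem energy_drop_le {d : ℕ} {μ₀ : Measure (Euc d)} (hμ₀ : IsProbabilityMeasure μ₀)
    {F : Measure (Euc d) → EReal} {lam : ℝ} (hlam : 0 < lam)
    (hbot : ∀ ρ, F ρ ≠ ⊥) (hconv : GenGeoConvex μ₀ lam F)
    {μ ρ : Measure (Euc d)} (hμ : μ ∈ Pfin μ₀)
    (hρ : ρ ∈ Pfin μ₀) {f g : ℝ} (hf : F μ = f) (hg : F ρ = g) (hs : slopeW μ₀ F μ ≠ ⊤) :
    f - g ≤ (slopeW μ₀ F μ).toReal * W2 μ ρ - lam / 2 * W2 μ ρ ^ 2 := by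
  rcases (W2_nonneg μ ρ).eq_or_lt with hw | hw
  · have := eq_of_W2_eq_zero hconv hμ hρ hw.symm
    rw [← hw]
    subst this
    have : f = g := EReal.coe_injective (hf.symm.trans hg)
    simp [this]
  by_contra! hlt
  set S := (slopeW μ₀ F μ).toReal with hS
  set w := W2 μ ρ with hwdef
  have hS0 : 0 ≤ S := ENNReal.toReal_nonneg
  -- a level `c` strictly between the slope and the claimed lower bound for it
  obtain ⟨c, hSc, hcD⟩ : ∃ c, S < c ∧ c < (f - g + lam / 2 * w ^ 2) / w :=
    exists_between ((lt_div_iff₀ hw).2 (by linarith))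
  rw [lt_div_iff₀ hw] at hcD
  have hc0 : 0 < c := hS0.trans_lt hSc
  -- with base point `μ` itself the generalized geodesic has `W₂(μ, γ α) ≤ α W₂(μ,ρ)`
  obtain ⟨C, γ, hC, hγ⟩ := exists_genGeodesic hμ₀ hbot hconv hμ hμ hρ hf hg
  have hself : W2 μ μ = 0 := by simp [W2, W2sq_self]
  have hev : ∀ᶠ α : ℝ in nhdsWithin 0 (Set.Ioi 0),
      0 < α ∧ α < 1 ∧ c * w < f - g + lam / 2 * w ^ 2 - α * (lam / 2 * w ^ 2) := by
    have ht : Tendsto (fun α : ℝ => f - g + lam / 2 * w ^ 2 - α * (lam / 2 * w ^ 2))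
        (nhdsWithin 0 (Set.Ioi 0)) (nhds (f - g + lam / 2 * w ^ 2 - 0 * (lam / 2 * w ^ 2))) :=
      ((continuous_const.sub (continuous_id.mul continuous_const)).tendsto 0).mono_left
        nhdsWithin_le_nhds
    rw [zero_mul, sub_zero] at ht
    filter_upwards [Ioo_mem_nhdsGT (zero_lt_one (α := ℝ)), ht.eventually (lt_mem_nhds hcD)]
      with α hα h
    exact ⟨hα.1, hα.2, h⟩
  have hdist : ∀ α : ℝ, 0 < α → α < 1 → W2 μ (γ α) ≤ α * w := by
    intro α h0 h1
    obtain ⟨-, h, -⟩ := hγ α h0.le h1.le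
    rw [hself] at h
    have h2 : α * (1 - α) * w ^ 2 ≤ α * (1 - α) * C :=
      mul_le_mul_of_nonneg_left hC (mul_nonneg h0.le (by linarith))
    refine abs_le_of_sq_le_sq' ?_ (by positivity) |>.2
    nlinarith
  have hdrop : ∀ᶠ α : ℝ in nhdsWithin 0 (Set.Ioi 0), 0 < α ∧ α < 1 ∧ γ α ∈ Pfin μ₀ ∧
      ∃ r : ℝ, F (γ α) = r ∧ c * (α * w) < f - r := by
    filter_upwards [hev] with α ⟨h0, h1, h⟩
    obtain ⟨hm, -, r, hr, hrle⟩ := hγ α h0.le h1.le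
    refine ⟨h0, h1, hm, r, hr, ?_⟩
    have h2 : α * (1 - α) * (lam / 2) * w ^ 2 ≤ α * (1 - α) * (lam / 2) * C :=
      mul_le_mul_of_nonneg_left hC
        (mul_nonneg (mul_nonneg h0.le (by linarith)) (by positivity))
    have h3 := mul_lt_mul_of_pos_left h h0
    nlinarith
  have htend : Tendsto γ (nhdsWithin 0 (Set.Ioi 0)) (W2nhdsWithin μ₀ μ) := by
    refine tendsto_W2nhdsWithin ?_ ?_
    · filter_upwards [hdrop] with α ⟨h0, h1, hm, r, hr, hlt'⟩
      refine ⟨hm, fun he => ?_⟩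
      rw [he, hf, EReal.coe_eq_coe_iff] at hr
      have : 0 < c * (α * w) := by positivity
      linarith
    · have ht : Tendsto (fun α : ℝ => α * w) (nhdsWithin 0 (Set.Ioi 0)) (nhds (0 * w)) :=
        ((continuous_id.mul continuous_const).tendsto 0).mono_left nhdsWithin_le_nhds
      rw [zero_mul] at ht
      refine tendsto_of_tendsto_of_tendsto_of_le_of_le' tendsto_const_nhds ht
        (Eventually.of_forall fun _ => W2_nonneg _ _) ?_
      filter_upwards [hev] with α ⟨h0, h1, _⟩
      exact hdist α h0 h1
  have hlim : slopeW μ₀ F μ < ENNReal.ofReal c := by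
    rw [← ENNReal.ofReal_toReal hs]
    exact (ENNReal.ofReal_lt_ofReal_iff hc0).2 hSc
  have hq := htend.eventually (eventually_lt_of_limsup_lt hlim)
  obtain ⟨α, hqα, h0, h1, hm, r, hr, hlt'⟩ := (hq.and hdrop).exists
  have haw : 0 < α * w := by positivity
  rw [hf, hr, ← EReal.coe_sub, ERealPos, if_neg (EReal.coe_ne_top _), EReal.toReal_coe] at hqα
  refine absurd hqα (not_lt.2 ?_)
  calc ENNReal.ofReal c = ENNReal.ofReal (c * (α * w)) / ENNReal.ofReal (α * w) := by
        rw [← ENNReal.ofReal_div_of_pos haw, mul_div_cancel_right₀ _ haw.ne']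
    _ ≤ _ := ENNReal.div_le_div (ENNReal.ofReal_le_ofReal hlt'.le)
        (ENNReal.ofReal_le_ofReal (hdist α h0 h1))

/-- Off the domain the slope is infinite, as soon as the point is a `W₂`-limit of the domain. -/
theorem slopeW_eq_top {d : ℕ} {μ₀ : Measure (Euc d)} {F : Measure (Euc d) → EReal}
    {μ : Measure (Euc d)} (hμ : μ ∈ W2Closure μ₀ (Dom μ₀ F)) (hF : F μ = ⊤) :
    slopeW μ₀ F μ = ⊤ := by
  obtain ⟨-, s, hs, ht⟩ := hμ
  have htend : Tendsto s atTop (W2nhdsWithin μ₀ μ) := by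
    refine tendsto_W2nhdsWithin (Eventually.of_forall fun n => ⟨(hs n).1, fun he => ?_⟩) ?_
    · exact (hs n).2 (he ▸ hF)
    · simpa only [W2_comm μ] using ht
  by_contra hne
  obtain ⟨n, hn⟩ := (htend.eventually (eventually_lt_of_limsup_lt (lt_top_iff_ne_top.2 hne))).exists
  have h1 : F μ - F (s n) = ⊤ := by
    rw [hF]
    exact EReal.top_sub (hs n).2
  rw [h1, ERealPos, if_pos rfl, ENNReal.top_div_of_ne_top ENNReal.ofReal_ne_top] at hn
  exact lt_irrefl _ hn

/-- The minimality of `μ_τ` and the triangle inequality bound the energy drop from `μ_τ` by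
`w (2 W₂(μ,μ_τ) + w) / (2τ)`, with `w` the distance travelled. -/
theorem slopeW_prox_le {d : ℕ} {μ₀ : Measure (Euc d)}
    {F : Measure (Euc d) → EReal} {lam : ℝ} (hproper : ProperFn μ₀ F)
    (hconv : GenGeoConvex μ₀ lam F) {τ : ℝ} (hτ : 0 < τ)
    {μ μτ : Measure (Euc d)} (hμ : μ ∈ Pfin μ₀) (h : IsProximal μ₀ F τ μ μτ) :
    slopeW μ₀ F μτ ≤ ENNReal.ofReal (W2 μ μτ / τ) := by
  set a := W2 μ μτ with ha
  have ha0 : 0 ≤ a := W2_nonneg _ _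
  have key : ∀ ε : ℝ, 0 < ε → slopeW μ₀ F μτ ≤ ENNReal.ofReal ((a + ε) / τ) := by
    intro ε hε
    refine limsup_le_of_le (h := ?_)
    have hmem : {ν | ν ∈ Pfin μ₀ ∧ ν ≠ μτ ∧ W2 μτ ν < ε} ∈ W2nhdsWithin μ₀ μτ :=
      mem_iInf_of_mem ε (mem_iInf_of_mem hε (mem_principal_self _))
    filter_upwards [hmem] with ν ⟨hν, _, hνε⟩
    have hw0 := W2_nonneg μτ ν
    refine ENNReal.div_le_of_le_mul ?_
    rw [← ENNReal.ofReal_mul (by positivity)]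
    have hfe := (EReal.coe_toReal (prox_ne_top hproper h) (hproper.1 μτ)).symm
    rcases eq_or_ne (F ν) ⊤ with hν' | hν'
    · simp [hν', ERealPos]
    have hge := (EReal.coe_toReal hν' (hproper.1 ν)).symm
    have hmin := h.2 ν hν
    rw [hfe, hge] at hmin ⊢
    rw [← EReal.coe_add, ← EReal.coe_add, EReal.coe_le_coe_iff] at hmin
    rw [← EReal.coe_sub, ERealPos, if_neg (EReal.coe_ne_top _), EReal.toReal_coe]
    refine ENNReal.ofReal_le_ofReal ?_
    have htri := W2_triangle hconv hμ h.1 hν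
    have hsq : W2 μ ν ^ 2 ≤ (a + W2 μτ ν) ^ 2 := pow_le_pow_left₀ (W2_nonneg _ _) htri 2
    have h1 : (F μτ).toReal - (F ν).toReal ≤ (W2 μ ν ^ 2 - a ^ 2) / (2 * τ) := by
      rw [sub_div]; linarith
    refine h1.trans ?_
    rw [div_mul_eq_mul_div, div_le_div_iff₀ (by positivity) hτ]
    have h2 : W2 μ ν ^ 2 - a ^ 2 ≤ 2 * ((a + ε) * W2 μτ ν) := by nlinarith
    nlinarith
  have ht : Tendsto (fun ε : ℝ => ENNReal.ofReal ((a + ε) / τ)) (nhdsWithin 0 (Set.Ioi 0))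
      (nhds (ENNReal.ofReal ((a + 0) / τ))) :=
    ((ENNReal.continuous_ofReal.comp ((continuous_const.add continuous_id).div_const τ)).tendsto
      0).mono_left nhdsWithin_le_nhds
  rw [add_zero] at ht
  exact ge_of_tendsto ht (eventually_mem_nhdsWithin.mono fun ε hε => key ε hε)

/-! ### The inequality between real numbers -/

/-- The real-number inequality behind the theorem. Here `k = τλ`, `w`, `wτ`, `x`, `y` stand for
`W₂(μ,ν)`, `W₂(μ_τ,ν_τ)`, `W₂(μ,ν_τ)`, `W₂(ν,μ_τ)`; `a`, `b` are the lengths of the proximal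
steps, `p`, `q` are `τ` times the slopes at `μ`, `ν`, `pτ`, `qτ` are `τ` times those at the
proximal points, `dμ`, `dν` are `τ` times the energy drops over the proximal steps, and
`L² = Λ_τ(μ,ν)`. -/
theorem real_contraction {k w wτ x y a b p q pτ qτ L dμ dν : ℝ} (hk0 : 0 < k) (hk1 : k ≤ 1)
    (hw : 0 ≤ w) (hx : 0 ≤ x) (hy : 0 ≤ y) (ha : 0 ≤ a) (hb : 0 ≤ b)
    (hpτ : 0 ≤ pτ) (hqτ : 0 ≤ qτ) (hL : 0 ≤ L)
    (hpa : pτ ≤ a) (hqb : qτ ≤ b) (hwx : w ≤ x + b) (hwy : w ≤ y + a)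
    (hL2 : L ^ 2 = w ^ 2 + p ^ 2 / 2 + q ^ 2 / 2)
    (h1 : (1 + k) * wτ ^ 2 + k / 2 * (x ^ 2 + y ^ 2) ≤ w ^ 2 - a ^ 2 - b ^ 2 + dμ + dν)
    (hdμ : dμ ≤ p * a - k / 2 * a ^ 2) (hdν : dν ≤ q * b - k / 2 * b ^ 2) :
    (1 + k) * (wτ ^ 2 + pτ ^ 2 / 2 + qτ ^ 2 / 2) ≤
      (1 - k) * L ^ 2 + 3 * k * L * (a + b) := by
  have hw2 := sq_nonneg w
  have hp2 := sq_nonneg p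
  have hq2 := sq_nonneg q
  have hwL : w ≤ L := (abs_le_of_sq_le_sq' (by linarith) hL).2
  have hpL : p ≤ 2 * L := (abs_le_of_sq_le_sq' (by rw [mul_pow]; linarith) (by positivity)).2
  have hqL : q ≤ 2 * L := (abs_le_of_sq_le_sq' (by rw [mul_pow]; linarith) (by positivity)).2
  have sq_lower : ∀ {u c : ℝ}, 0 ≤ u → 0 ≤ c → w ≤ u + c → w ^ 2 - 2 * w * c ≤ u ^ 2 := by
    intro u c hu hc h
    rcases le_total w c with h' | h'
    · nlinarith [mul_nonneg hw hc, mul_le_mul_of_nonneg_left h' hw, sq_nonneg u]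
    · have := pow_le_pow_left₀ (by linarith : 0 ≤ w - c) (by linarith : w - c ≤ u) 2
      nlinarith [sq_nonneg c]
  have sx := sq_lower hx hb hwx
  have sy := sq_lower hy ha hwy
  have hk' : 0 ≤ 1 - k := by linarith
  -- Young's inequality is used only on the fraction `1 - k` of the slope terms
  have yp : (1 - k) * (p * a - a ^ 2 / 2) ≤ (1 - k) * (p ^ 2 / 2) :=
    mul_le_mul_of_nonneg_left (by linarith [sq_nonneg (p - a), sub_sq p a]) hk'
  have yq : (1 - k) * (q * b - b ^ 2 / 2) ≤ (1 - k) * (q ^ 2 / 2) :=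
    mul_le_mul_of_nonneg_left (by linarith [sq_nonneg (q - b), sub_sq q b]) hk'
  have zp : k * (p * a) ≤ k * (2 * L * a) := by gcongr
  have zq : k * (q * b) ≤ k * (2 * L * b) := by gcongr
  have zw : k * (w * (a + b)) ≤ k * (L * (a + b)) := by gcongr
  have up : (1 + k) * pτ ^ 2 ≤ (1 + k) * a ^ 2 := by gcongr
  have uq : (1 + k) * qτ ^ 2 ≤ (1 + k) * b ^ 2 := by gcongr
  have vx := mul_le_mul_of_nonneg_left (add_le_add sx sy) (by positivity : 0 ≤ k / 2)
  have va : 0 ≤ k * a ^ 2 := by positivity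
  have vb : 0 ≤ k * b ^ 2 := by positivity
  rw [hL2]
  linarith only [h1, hdμ, hdν, yp, yq, zp, zq, zw, up, uq, vx, va, vb]

/-! ### The contraction estimate -/

theorem LamT_eq_ofReal {d : ℕ} {μ₀ : Measure (Euc d)} {F : Measure (Euc d) → EReal} {τ : ℝ}
    (hτ : 0 < τ)
    {μ ν : Measure (Euc d)} (h : W2sq μ ν ≠ ⊤) (hμ : slopeW μ₀ F μ ≠ ⊤) (hν : slopeW μ₀ F ν ≠ ⊤) :
    LamT μ₀ F τ μ ν = ENNReal.ofReal (W2 μ ν ^ 2 + (τ * (slopeW μ₀ F μ).toReal) ^ 2 / 2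
      + (τ * (slopeW μ₀ F ν).toReal) ^ 2 / 2) := by
  have e : ∀ s : ℝ≥0∞, s ≠ ⊤ → ENNReal.ofReal (τ ^ 2 / 2) * s ^ 2 =
      ENNReal.ofReal ((τ * s.toReal) ^ 2 / 2) := by
    intro s hs
    conv_lhs => rw [← ENNReal.ofReal_toReal hs]
    rw [← ENNReal.ofReal_pow ENNReal.toReal_nonneg, ← ENNReal.ofReal_mul (by positivity)]
    congr 1; ring
  rw [LamT, e _ hμ, e _ hν, W2_sq, ENNReal.ofReal_add (by positivity) (by positivity),
    ENNReal.ofReal_add (by positivity) (by positivity), ENNReal.ofReal_toReal h]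

/-- **The case `λ > 0`** (Corollary 1.4). For `E` proper, coercive, lower semicontinuous,
`λ`-convex along generalized geodesics with `λ > 0`, and `0 < τ` with `τλ ≤ 1`,
for all `μ, ν` in the `W₂`-closure of `D(E)` with proximal points `μ_τ, ν_τ`:
`(1+τλ) Λ_τ(μ_τ,ν_τ) ≤ (1-τλ) Λ_τ(μ,ν) + 3λτ Λ_τ(μ,ν)^{1/2} [W₂(μ,μ_τ) + W₂(ν,ν_τ)]`. -/
theorem proximal_contraction_poslam
    {d : ℕ} (μ₀ : Measure (Euc d)) (hμ₀ : IsProbabilityMeasure μ₀)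
    (F : Measure (Euc d) → EReal) (lam : ℝ) (hlam : 0 < lam)
    (hproper : ProperFn μ₀ F) (hcoer : CoerciveFn μ₀ F) (hlsc : W2LSC μ₀ F)
    (hconv : GenGeoConvex μ₀ lam F)
    (τ : ℝ) (hτ : 0 < τ) (hτlam : τ * lam ≤ 1)
    (μ ν : Measure (Euc d))
    (hμ : μ ∈ W2Closure μ₀ (Dom μ₀ F)) (hν : ν ∈ W2Closure μ₀ (Dom μ₀ F))
    (μτ ντ : Measure (Euc d))
    (hμτ : IsProximal μ₀ F τ μ μτ) (hντ : IsProximal μ₀ F τ ν ντ) :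
    ENNReal.ofReal (1 + τ * lam) * LamT μ₀ F τ μτ ντ ≤
      ENNReal.ofReal (1 - τ * lam) * LamT μ₀ F τ μ ν
        + ENNReal.ofReal (3 * lam * τ) * (LamT μ₀ F τ μ ν) ^ ((1 : ℝ)/2)
            * ENNReal.ofReal (W2 μ μτ + W2 ν ντ) := by
  have hbot := hproper.1
  have mμ := hμ.1
  have mν := hν.1
  have tμτ := ne_top_of_le_ne_top ENNReal.ofReal_ne_top
    (slopeW_prox_le hproper hconv hτ mμ hμτ)
  have tντ := ne_top_of_le_ne_top ENNReal.ofReal_ne_top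
    (slopeW_prox_le hproper hconv hτ mν hντ)
  have ha := W2_nonneg μ μτ
  have hb := W2_nonneg ν ντ
  by_cases htop : slopeW μ₀ F μ ≠ ⊤ ∧ slopeW μ₀ F ν ≠ ⊤
  · obtain ⟨tμ, tν⟩ := htop
    have fμ : F μ ≠ ⊤ := fun h => tμ (slopeW_eq_top hμ h)
    have fν : F ν ≠ ⊤ := fun h => tν (slopeW_eq_top hν h)
    have eμ := (EReal.coe_toReal fμ (hbot μ)).symm
    have eν := (EReal.coe_toReal fν (hbot ν)).symm
    have eμτ := (EReal.coe_toReal (prox_ne_top hproper hμτ) (hbot μτ)).symm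
    have eντ := (EReal.coe_toReal (prox_ne_top hproper hντ) (hbot ντ)).symm
    have pμ : (slopeW μ₀ F μτ).toReal ≤ W2 μ μτ / τ :=
      ENNReal.toReal_le_of_le_ofReal (by positivity) (slopeW_prox_le hproper hconv hτ mμ hμτ)
    have pν : (slopeW μ₀ F ντ).toReal ≤ W2 ν ντ / τ :=
      ENNReal.toReal_le_of_le_ofReal (by positivity) (slopeW_prox_le hproper hconv hτ mν hντ)
    rw [le_div_iff₀ hτ, mul_comm] at pμ pν
    have d1 := discrete_variational hμ₀ hlam hbot hconv hτ mμ hμτ hντ.1 eμτ eντ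
    have d2 := discrete_variational hμ₀ hlam hbot hconv hτ mν hντ mμ eντ eμ
    have d3 := discrete_variational hμ₀ hlam hbot hconv hτ mν hντ hμτ.1 eντ eμτ
    have d4 := discrete_variational hμ₀ hlam hbot hconv hτ mμ hμτ mν eμτ eν
    rw [W2_comm ντ μ, W2_comm ν μ] at d2
    rw [W2_comm ντ μτ] at d3
    rw [W2_comm μτ ν] at d4
    have gμ := energy_drop_le hμ₀ hlam hbot hconv mμ hμτ.1 eμ eμτ tμ
    have gν := energy_drop_le hμ₀ hlam hbot hconv mν hντ.1 eν eντ tν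
    have t1 := W2_triangle hconv mμ hντ.1 mν
    have t2 := W2_triangle hconv mν hμτ.1 mμ
    rw [W2_comm ντ ν] at t1
    rw [W2_comm μτ μ, W2_comm ν μ] at t2
    rw [LamT_eq_ofReal hτ (W2sq_ne_top hμτ.1 hντ.1) tμτ tντ,
      LamT_eq_ofReal hτ (W2sq_ne_top mμ mν) tμ tν]
    set Q := W2 μ ν ^ 2 + (τ * (slopeW μ₀ F μ).toReal) ^ 2 / 2
      + (τ * (slopeW μ₀ F ν).toReal) ^ 2 / 2 with hQ
    have hQ0 : 0 ≤ Q := by positivity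
    have hk' : 0 ≤ 1 - τ * lam := by linarith
    rw [ENNReal.ofReal_rpow_of_nonneg hQ0 (by norm_num), ← Real.sqrt_eq_rpow,
      ← ENNReal.ofReal_mul (by positivity), ← ENNReal.ofReal_mul hk',
      ← ENNReal.ofReal_mul (by positivity), ← ENNReal.ofReal_mul (by positivity),
      ← ENNReal.ofReal_add (by positivity) (by positivity)]
    refine ENNReal.ofReal_le_ofReal ?_
    have main := real_contraction (k := τ * lam) (L := Real.sqrt Q) (wτ := W2 μτ ντ)
      (p := τ * (slopeW μ₀ F μ).toReal) (q := τ * (slopeW μ₀ F ν).toReal)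
      (dμ := τ * ((F μ).toReal - (F μτ).toReal)) (dν := τ * ((F ν).toReal - (F ντ).toReal))
      (by positivity) hτlam (W2_nonneg μ ν)
      (W2_nonneg μ ντ) (W2_nonneg ν μτ) ha hb
      (by positivity) (by positivity) (Real.sqrt_nonneg Q) pμ pν t1 t2
      (Real.sq_sqrt hQ0) (by linarith)
      ((mul_le_mul_of_nonneg_left gμ hτ.le).trans (le_of_eq (by ring)))
      ((mul_le_mul_of_nonneg_left gν hτ.le).trans (le_of_eq (by ring)))
    rw [Real.sq_sqrt hQ0] at main
    linarith
  · -- an infinite slope forces at least one proximal step to be nontrivial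
    have hab : 0 < W2 μ μτ + W2 ν ντ := by
      by_contra! h
      have e1 := eq_of_W2_eq_zero hconv mμ hμτ.1 (by linarith)
      have e2 := eq_of_W2_eq_zero hconv mν hντ.1 (by linarith)
      exact htop ⟨e1 ▸ tμτ, e2 ▸ tντ⟩
    have hΛ : LamT μ₀ F τ μ ν = ⊤ := by
      have hc : ENNReal.ofReal (τ ^ 2 / 2) ≠ 0 := by
        rw [Ne, ENNReal.ofReal_eq_zero, not_le]; positivity
      rw [LamT]
      by_cases h : slopeW μ₀ F μ = ⊤
      · simp [h, ENNReal.mul_top hc]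
      · have h' : slopeW μ₀ F ν = ⊤ := by
          by_contra h'; exact htop ⟨h, h'⟩
        simp [h', ENNReal.mul_top hc]
    have hc : ENNReal.ofReal (3 * lam * τ) ≠ 0 := by
      rw [Ne, ENNReal.ofReal_eq_zero, not_le]; positivity
    have hd : ENNReal.ofReal (W2 μ μτ + W2 ν ντ) ≠ 0 := by
      rw [Ne, ENNReal.ofReal_eq_zero, not_le]; exact hab
    rw [hΛ, ENNReal.top_rpow_of_pos (by norm_num), ENNReal.mul_top hc, ENNReal.top_mul hd, add_top]
    exact le_top
end
end

section
/- Fix Borel probability measures μ₁, μ₂, μ₃ on ℝ^d that are pairwise at finite 2-Wasserstein distance. Let 𝛍 be a Borel probability measure on ℝ^d×ℝ^d×ℝ^d such that 𝛍_{1,2} := π_{1,2}#𝛍 is an optimal transport plan from μ₁ to μ₂ and π_{2,3}#𝛍 is an optimal transport plan from μ₂ to μ₃. For α ∈ [0,1] define μ_α^{1→3} := ((1−α)π₁ + απ₃)#𝛍 and μ_α^{1→2} := ((1−α)π₁ + απ₂)#𝛍_{1,2}. Then for all α ∈ [0,1]: W₂²(μ_α^{1→2}, μ_α^{1→3}) ≤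 α W₂²(μ₂,μ₃) − α(1−α) W₂²(μ₂,μ₃) = α² W₂²(μ₂,μ₃). -/
/-! The 3-plan `pl` itself couples the two interpolations: its pushforward under
`(x, y, z) ↦ ((1-α)x + αy, (1-α)x + αz)` has them as marginals, and since the difference of the
two components is `α(y - z)`, its cost is `α²` times the cost of the (2,3)-marginal of `pl`, which
is `α² W₂²(μ₂,μ₃)` by optimality. -/

open MeasureTheory Filter ENNReal

noncomputable section

/-- For any 3-plan, the coupling induced on the two interpolations with common starting point
bounds their squared distance by `α²` times the cost of the (2,3)-marginal. -/
lemma W2sq_interp_le {d : ℕ} (pl : Measure (Euc d × Euc d × Euc d)) (α : ℝ) :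
    W2sq ((pl.map (fun q => (q.1, q.2.1))).map
          (fun q : Euc d × Euc d => (1 - α) • q.1 + α • q.2))
        (pl.map (fun q => (1 - α) • q.1 + α • q.2.2))
      ≤ ENNReal.ofReal (α ^ 2) *
        ∫⁻ q, ENNReal.ofReal (‖q.1 - q.2‖ ^ 2) ∂(pl.map (fun q => (q.2.1, q.2.2))) := by
  have hmeas : Measurable (fun q : Euc d × Euc d × Euc d =>
      ((1 - α) • q.1 + α • q.2.1, (1 - α) • q.1 + α • q.2.2)) := by fun_prop
  refine (iInf₂_le (pl.map (fun q => ((1 - α) • q.1 + α • q.2.1, (1 - α) • q.1 + α • q.2.2)))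
    ⟨?_, ?_⟩).trans ?_
  · rw [lintegral_map (by fun_prop) hmeas, lintegral_map (by fun_prop) (by fun_prop),
      ← lintegral_const_mul _ (by fun_prop)]
    refine le_of_eq (lintegral_congr fun q => ?_)
    rw [← ENNReal.ofReal_mul (sq_nonneg α), add_sub_add_left_eq_sub, ← smul_sub, norm_smul,
      mul_pow, Real.norm_eq_abs, sq_abs]
  · rw [Measure.map_map measurable_fst hmeas, Measure.map_map (by fun_prop) (by fun_prop)]
    rfl
  · rw [Measure.map_map measurable_snd hmeas]
    rfl

/-- **Convexity inequality for `W₂²`** (Lemma 3.1). Given `μ₁, μ₂, μ₃` pairwise at finite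
`W₂`-distance and a 3-plan `𝛍` whose (1,2)-marginal is an optimal plan from `μ₁` to `μ₂`
and whose (2,3)-marginal is an optimal plan from `μ₂` to `μ₃`, the interpolations
`μ_α^{1→2} = ((1-α)π₁+απ₂)#𝛍_{1,2}` and `μ_α^{1→3} = ((1-α)π₁+απ₃)#𝛍` satisfy
`W₂²(μ_α^{1→2}, μ_α^{1→3}) ≤ α W₂²(μ₂,μ₃) - α(1-α) W₂²(μ₂,μ₃) = α² W₂²(μ₂,μ₃)`. -/
theorem W2sq_convexity_inequality
    {d : ℕ} (μ₁ μ₂ μ₃ : Measure (Euc d))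
    (h₁ : IsProbabilityMeasure μ₁) (h₂ : IsProbabilityMeasure μ₂)
    (h₃ : IsProbabilityMeasure μ₃)
    (h₁₂ : W2sq μ₁ μ₂ ≠ ⊤) (h₁₃ : W2sq μ₁ μ₃ ≠ ⊤) (h₂₃ : W2sq μ₂ μ₃ ≠ ⊤)
    (pl : Measure (Euc d × Euc d × Euc d))
    (hpl12 : IsOptimalPlan μ₁ μ₂ (pl.map (fun q => (q.1, q.2.1))))
    (hpl23 : IsOptimalPlan μ₂ μ₃ (pl.map (fun q => (q.2.1, q.2.2)))) :
    ∀ α ∈ Set.Icc (0:ℝ) 1,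
      (W2 ((pl.map (fun q => (q.1, q.2.1))).map (fun q : Euc d × Euc d => (1 - α) • q.1 + α • q.2))
          (pl.map (fun q => (1 - α) • q.1 + α • q.2.2))) ^ 2
        ≤ α * (W2 μ₂ μ₃) ^ 2 - α * (1 - α) * (W2 μ₂ μ₃) ^ 2 ∧
      α * (W2 μ₂ μ₃) ^ 2 - α * (1 - α) * (W2 μ₂ μ₃) ^ 2 = α ^ 2 * (W2 μ₂ μ₃) ^ 2 := by
  intro α _
  have hsq : ∀ μ ν : Measure (Euc d), W2 μ ν ^ 2 = (W2sq μ ν).toReal :=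
    fun μ ν => Real.sq_sqrt ENNReal.toReal_nonneg
  have heq : α * (W2 μ₂ μ₃) ^ 2 - α * (1 - α) * (W2 μ₂ μ₃) ^ 2 = α ^ 2 * (W2 μ₂ μ₃) ^ 2 := by ring
  refine ⟨?_, heq⟩
  have hle := W2sq_interp_le pl α
  rw [hpl23.2.2] at hle
  -- `W2sq μ₂ μ₃ ≠ ⊤` is needed for `toReal` to be monotone here
  have hreal := ENNReal.toReal_mono (ENNReal.mul_ne_top ENNReal.ofReal_ne_top h₂₃) hle
  rw [ENNReal.toReal_mul, ENNReal.toReal_ofReal (sq_nonneg α)] at hreal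
  rw [heq, hsq, hsq]
  exact hreal
end
end
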